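/- arXiv:2310.11024 — 11 statements merged into one kernel-verified Lean document; each statement's English description precedes it below -/
import Mathlib

section
/- Let v₁ and v₂ be vectors in ℤ² that form a basis of ℤ² and suppose ‖v₁‖ < ‖v₂‖ (Euclidean norms). Then either ‖v₂ − v₁‖ < ‖v₂‖ or ‖v₂ + v₁‖ < ‖v₂‖. -/
/-! With `N₁ = ‖v₁‖²`, `N₂ = ‖v₂‖²` and `p = v₁ ⬝ v₂`, the claim is `N₁ < 2 |p|`. The Lagrange
identity gives `p² + 1 = N₁ N₂`, and integrality gives `N₂ ≥ N₁ + 1` and `N₁ ≥ 1`. Then `2 |p| ≤ N₁`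
would force `N₁² + 4 ≥ 4 N₁ N₂ ≥ 4 N₁² + 4 N₁`, impossible for `N₁ ≥ 1`. -/


/-- Determinant of two vectors in `ℤ × ℤ`. -/
def det2 (v w : ℤ × ℤ) : ℤ := v.1 * w.2 - v.2 * w.1

/-- `v` and `w` form a basis of `ℤ²` iff their determinant is `1` or `-1`. -/
def IsBasisZ2 (v w : ℤ × ℤ) : Prop := det2 v w = 1 ∨ det2 v w = -1

/-- Euclidean norm of a vector in `ℤ² ⊂ ℝ²`. -/
noncomputable def znorm (v : ℤ × ℤ) : ℝ := Real.sqrt ((v.1 : ℝ) ^ 2 + (v.2 : ℝ) ^ 2)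

/-- Cyclic indexing (indices modulo the length) in a list of vectors in `ℤ²`. -/
def cyc (l : List (ℤ × ℤ)) (i : ℤ) : ℤ × ℤ := l.getD (i % (l.length : ℤ)).toNat (0, 0)

/-- A cyclic sequence `(v₁, …, v_k)` of vectors in `ℤ²` is an *admissible multi-fan* if
for every `i`, `v_{i-1}` and `v_i` form a basis of `ℤ²` and
`v_{i+1} = -a_i • v_i - v_{i-1}` for some integer `a_i`. -/
def AdmissibleMultiFan (l : List (ℤ × ℤ)) : Prop :=
  ∀ i : ℤ, IsBasisZ2 (cyc l i) (cyc l (i + 1)) ∧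
    ∃ a : ℤ, cyc l (i + 2) = -(a • cyc l (i + 1)) - cyc l i

/-- Blow up of a multi-fan at index `i`: insert `v_i + v_{i+1}` between `v_i` and `v_{i+1}`. -/
def BlowUp (l l' : List (ℤ × ℤ)) : Prop :=
  ∃ i : ℕ, i < l.length ∧
    l' = l.take (i + 1) ++ (cyc l i + cyc l ((i : ℤ) + 1)) :: l.drop (i + 1)

/-- Blow down of a multi-fan at index `i`: when `v_i = v_{i-1} + v_{i+1}` (cyclically),
delete `v_i`. -/
def BlowDown (l l' : List (ℤ × ℤ)) : Prop :=
  ∃ i : ℕ, i < l.length ∧ cyc l i = cyc l ((i : ℤ) - 1) + cyc l ((i : ℤ) + 1) ∧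
    l' = l.eraseIdx i

/-- A multi-fan is *minimal* if every vector in it is a unit vector of `ℤ²`. -/
def MinimalFan (l : List (ℤ × ℤ)) : Prop :=
  ∀ v ∈ l, v = (1, 0) ∨ v = (-1, 0) ∨ v = (0, 1) ∨ v = (0, -1)

theorem znorm_lt_znorm_iff (v w : ℤ × ℤ) :
    znorm v < znorm w ↔ v.1 ^ 2 + v.2 ^ 2 < w.1 ^ 2 + w.2 ^ 2 := by
  unfold znorm
  rw [Real.sqrt_lt_sqrt_iff (by positivity)]
  exact_mod_cast Iff.rfl

/-- If `v₁, v₂` form a basis of `ℤ²` and `‖v₁‖ < ‖v₂‖`, then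
`‖v₂ - v₁‖ < ‖v₂‖` or `‖v₂ + v₁‖ < ‖v₂‖`. -/
theorem stmt_0 (v₁ v₂ : ℤ × ℤ) (hbasis : IsBasisZ2 v₁ v₂) (hlt : znorm v₁ < znorm v₂) :
    znorm (v₂ - v₁) < znorm v₂ ∨ znorm (v₂ + v₁) < znorm v₂ := by
  rw [znorm_lt_znorm_iff] at hlt ⊢
  rw [znorm_lt_znorm_iff]
  obtain ⟨a, b⟩ := v₁
  obtain ⟨c, d⟩ := v₂
  simp only [Prod.fst_sub, Prod.snd_sub, Prod.fst_add, Prod.snd_add] at hlt ⊢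
  have hdet : (a * d - b * c) ^ 2 = 1 := by
    rcases hbasis with h | h <;> simp only [det2] at h <;> rw [h] <;> norm_num
  by_contra! h
  obtain ⟨h1, h2⟩ := h
  have lagrange : (a * c + b * d) ^ 2 + 1 = (a ^ 2 + b ^ 2) * (c ^ 2 + d ^ 2) := by
    linear_combination -hdet
  have hpos : 0 < a ^ 2 + b ^ 2 := by
    have hne : a ^ 2 + b ^ 2 ≠ 0 := by
      intro h0
      rw [h0] at lagrange
      nlinarith [sq_nonneg (a * c + b * d)]
    exact lt_of_le_of_ne (by positivity) hne.symm
  have hle : 2 * (a * c + b * d) ≤ a ^ 2 + b ^ 2 := by linarith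
  have hge : -(a ^ 2 + b ^ 2) ≤ 2 * (a * c + b * d) := by linarith
  generalize a * c + b * d = p at *
  generalize a ^ 2 + b ^ 2 = m at *
  generalize c ^ 2 + d ^ 2 = n at *
  have hp : (2 * p) ^ 2 ≤ m ^ 2 := sq_le_sq' hge hle
  nlinarith [mul_le_mul_of_nonneg_left (Int.add_one_le_iff.mpr hlt) hpos.le]
end

section
/- Let v₁ and v₂ be vectors in ℤ² that form a basis of ℤ², and suppose max(‖v₁‖², ‖v₂‖²) ≥ 2 (i.e., not both are unit vectors). Then 2·⟨v₁,v₂⟩² ≥ ‖v₁‖²·‖v₂‖², where ⟨v₁,v₂⟩ = v₁.1·v₂.1 + v₁.2·v₂.2; equivalently, either the angle between v₁ and v₂ or the angle between −v₁ and v₂ is at most π/4. -/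
/-- If `v₁, v₂` form a basis of `ℤ²` and `max (‖v₁‖², ‖v₂‖²) ≥ 2`, then
`2⟨v₁,v₂⟩² ≥ ‖v₁‖²‖v₂‖²`. -/
theorem stmt_1 (v₁ v₂ : ℤ × ℤ) (hbasis : IsBasisZ2 v₁ v₂)
    (hmax : 2 ≤ max (znorm v₁ ^ 2) (znorm v₂ ^ 2)) :
    znorm v₁ ^ 2 * znorm v₂ ^ 2 ≤
      2 * ((v₁.1 * v₂.1 + v₁.2 * v₂.2 : ℤ) : ℝ) ^ 2 := by
  have hsq (v : ℤ × ℤ) : znorm v ^ 2 = ((v.1 ^ 2 + v.2 ^ 2 : ℤ) : ℝ) := by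
    rw [znorm, Real.sq_sqrt (by positivity)]
    push_cast
    rfl
  rw [hsq, hsq] at hmax ⊢
  norm_cast at hmax ⊢
  obtain ⟨a, b⟩ := v₁
  obtain ⟨c, d⟩ := v₂
  simp only [IsBasisZ2, det2] at hbasis hmax ⊢
  have hdet : (a * d - b * c) ^ 2 = 1 := by
    rcases hbasis with h | h <;> rw [h] <;> norm_num
  -- Lagrange's identity, with determinant `±1`.
  have hlag : (a ^ 2 + b ^ 2) * (c ^ 2 + d ^ 2) = (a * c + b * d) ^ 2 + 1 := by
    linear_combination hdet
  have hne : a * c + b * d ≠ 0 := by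
    intro h0
    -- Two nonnegative integers with product `1` are both `1`.
    rw [h0, zero_pow two_ne_zero, zero_add] at hlag
    have h1 : a ^ 2 + b ^ 2 = 1 := Int.eq_one_of_mul_eq_one_right (by positivity) hlag
    have h2 : c ^ 2 + d ^ 2 = 1 := Int.eq_one_of_mul_eq_one_left (by positivity) hlag
    rw [h1, h2] at hmax
    norm_num at hmax
  have hpos : 0 < (a * c + b * d) ^ 2 := by positivity
  linarith [Int.add_one_le_iff.mpr hpos]
end

section
/- Let v₁ and v₂ be vectors in ℤ² that form a basis of ℤ² and suppose ‖v₁‖ = ‖v₂‖. Then v₁ and v₂ are unit vectors, i.e., ‖v₁‖ = ‖v₂‖ = 1. -/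
/-- If `v₁, v₂` form a basis of `ℤ²` and `‖v₁‖ = ‖v₂‖`, then both are unit vectors. -/
theorem stmt_2 (v₁ v₂ : ℤ × ℤ) (hbasis : IsBasisZ2 v₁ v₂) (heq : znorm v₁ = znorm v₂) :
    znorm v₁ = 1 ∧ znorm v₂ = 1 := by
  obtain ⟨a, b⟩ := v₁
  obtain ⟨c, d⟩ := v₂
  simp only [IsBasisZ2, det2] at hbasis
  simp only [znorm] at heq ⊢
  have hR : (a : ℝ) ^ 2 + (b : ℝ) ^ 2 = (c : ℝ) ^ 2 + (d : ℝ) ^ 2 :=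
    (Real.sqrt_inj (by positivity) (by positivity)).1 heq
  have hZ : a ^ 2 + b ^ 2 = c ^ 2 + d ^ 2 := by exact_mod_cast hR
  have hdet : (a * d - b * c) ^ 2 = 1 := by
    rcases hbasis with h | h <;> rw [h] <;> norm_num
  have hfac : (a ^ 2 + b ^ 2 - (a * c + b * d)) * (a ^ 2 + b ^ 2 + (a * c + b * d)) = 1 := by
    linear_combination (a ^ 2 + b ^ 2) * hZ + hdet
  have hN : a ^ 2 + b ^ 2 = 1 := by
    have h0 : 0 ≤ a ^ 2 + b ^ 2 := by positivity
    rcases Int.eq_one_or_neg_one_of_mul_eq_one' hfac with h | h <;> omega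
  have hNR : (a : ℝ) ^ 2 + (b : ℝ) ^ 2 = 1 := by exact_mod_cast hN
  exact ⟨by rw [hNR, Real.sqrt_one], by rw [← hR, hNR, Real.sqrt_one]⟩
end

section
/- Every admissible multi-fan has at least three vectors: if (v₁, …, v_k) is an admissible multi-fan, then k ≥ 3. -/
/-- Every admissible multi-fan has at least three vectors. -/
theorem stmt_3 (l : List (ℤ × ℤ)) (h : AdmissibleMultiFan l) : 3 ≤ l.length := by
  -- With indices modulo `2`, the relation at `v₀` reads `2 v₀ = -a v₁`, so `2 det(v₀, v₁) = 0`.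
  -- For lengths `0` and `1` consecutive vectors coincide, so their determinant is zero.
  by_contra hlen
  obtain ⟨hb, a, ha⟩ := h 0
  match l, hlen with
  | [], _ => simp [cyc, IsBasisZ2, det2] at hb
  | [u], _ => simp [cyc, IsBasisZ2, det2, mul_comm] at hb
  | [u, v], _ =>
    simp only [cyc, IsBasisZ2, det2, List.length_cons, List.length_nil] at hb ha
    norm_num at hb ha
    have h1 := congrArg Prod.fst ha
    have h2 := congrArg Prod.snd ha
    simp at h1 h2
    have h0 : 2 * (u.1 * v.2 - u.2 * v.1) = 0 := by
      linear_combination v.2 * h1 - v.1 * h2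
    omega
  | _ :: _ :: _ :: _, hlen => simp at hlen
end

section
/- Blow up preserves admissibility: if (v₁, …, v_k) is an admissible multi-fan and 1 ≤ i ≤ k, then the cyclic sequence (v₁, …, v_i, v_i + v_{i+1}, v_{i+1}, …, v_k) obtained by inserting v_i + v_{i+1} between v_i and v_{i+1} is again an admissible multi-fan. -/
lemma cyc_add_length (l : List (ℤ × ℤ)) (j : ℤ) : cyc l (j + l.length) = cyc l j := by
  simp [cyc]

lemma cyc_emod (l : List (ℤ × ℤ)) (j : ℤ) : cyc l (j % l.length) = cyc l j := by
  simp [cyc]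

lemma cyc_natCast (l : List (ℤ × ℤ)) (n : ℕ) (hn : n < l.length) :
    cyc l n = l.getD n (0, 0) := by
  have : ((n : ℤ) % (l.length : ℤ)) = n := Int.emod_eq_of_lt (by omega) (by omega)
  simp [cyc, this]

lemma length_insert (l : List (ℤ × ℤ)) (s : ℤ × ℤ) (i : ℕ) (hi : i < l.length) :
    (l.take (i + 1) ++ s :: l.drop (i + 1)).length = l.length + 1 := by
  simp; omega

lemma cyc_insert_self (l : List (ℤ × ℤ)) (s : ℤ × ℤ) (i : ℕ) (hi : i < l.length) :
    cyc (l.take (i + 1) ++ s :: l.drop (i + 1)) ((i : ℤ) + 1) = s := by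
  have := cyc_natCast (l.take (i + 1) ++ s :: l.drop (i + 1)) (i + 1)
    (by rw [length_insert l s i hi]; omega)
  push_cast at this
  rw [this, List.getD_append_right _ _ _ _ (by simp)]
  have : i + 1 - min (i + 1) l.length = 0 := by omega
  simp [this]

/-- Counted from the inserted vector, the new sequence agrees with the old one for one full
period, also across the end of the list. -/
lemma cyc_insert_shift (l : List (ℤ × ℤ)) (s : ℤ × ℤ) (i : ℕ) (hi : i < l.length)
    (m : ℤ) (h1 : 1 ≤ m) (h2 : m ≤ l.length) :
    cyc (l.take (i + 1) ++ s :: l.drop (i + 1)) ((i : ℤ) + 1 + m) = cyc l (i + m) := by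
  have hlen := length_insert l s i hi
  lift m to ℕ using by omega
  by_cases hm : i + 1 + m ≤ l.length
  · have e := cyc_natCast (l.take (i + 1) ++ s :: l.drop (i + 1)) (i + 1 + m) (by omega)
    have e' := cyc_natCast l (i + m) (by omega)
    push_cast at e e'
    rw [e, e', List.getD_append_right _ _ _ _ (by simp only [List.length_take]; omega)]
    obtain ⟨n, rfl⟩ : ∃ n, m = n + 1 := ⟨m - 1, by omega⟩
    have : i + 1 + (n + 1) - min (i + 1) l.length = n + 1 := by omega
    simp [this, List.getD_eq_getElem?_getD, List.getElem?_drop]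
    congr 2; omega
  · obtain ⟨n, hn⟩ : ∃ n, i + m = l.length + n := ⟨i + m - l.length, by omega⟩
    have a1 : (i : ℤ) + 1 + m = n + (l.take (i + 1) ++ s :: l.drop (i + 1)).length := by
      rw [hlen]; push_cast; omega
    have a2 : (i : ℤ) + m = n + l.length := by omega
    rw [a1, a2, cyc_add_length, cyc_add_length, cyc_natCast _ _ (by omega),
      cyc_natCast _ _ (by omega), List.getD_append _ _ _ _ (by simp only [List.length_take]; omega)]
    simp only [List.getD_eq_getElem?_getD]
    rw [List.getElem?_take_of_lt (by omega)]

/-- Blow up preserves admissibility: inserting `v_i + v_{i+1}` between `v_i` and `v_{i+1}`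
in an admissible multi-fan yields an admissible multi-fan. -/
theorem stmt_4 (l : List (ℤ × ℤ)) (h : AdmissibleMultiFan l) (i : ℕ) (hi : i < l.length) :
    AdmissibleMultiFan
      (l.take (i + 1) ++ (cyc l i + cyc l ((i : ℤ) + 1)) :: l.drop (i + 1)) := by
  have hk : 2 ≤ l.length := by
    by_contra hk
    have h1 : l.length = 1 := by omega
    have hb := (h 0).1
    have e := cyc_add_length l 0
    rw [h1] at e
    push_cast at e
    rw [zero_add] at hb
    rw [e] at hb
    simp only [IsBasisZ2, det2] at hb
    grind
  have hlen := length_insert l (cyc l i + cyc l ((i : ℤ) + 1)) i hi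
  have h0 := cyc_insert_self l (cyc l i + cyc l ((i : ℤ) + 1)) i hi
  have hs := cyc_insert_shift l (cyc l i + cyc l ((i : ℤ) + 1)) i hi
  set L := l.take (i + 1) ++ (cyc l i + cyc l ((i : ℤ) + 1)) :: l.drop (i + 1)
  have hper : ∀ j : ℤ, cyc L (j + (l.length + 1)) = cyc L j := fun j => by
    rw [← cyc_add_length L j, hlen]; push_cast; rfl
  -- By periodicity it suffices to check one period, starting at the inserted vector.
  suffices H : ∀ m : ℤ, 0 ≤ m → m ≤ l.length →
      IsBasisZ2 (cyc L (i + 1 + m)) (cyc L (i + 1 + m + 1)) ∧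
      ∃ a : ℤ, cyc L (i + 1 + m + 2) = -(a • cyc L (i + 1 + m + 1)) - cyc L (i + 1 + m) by
    intro j
    have hpos : (0 : ℤ) < l.length + 1 := by omega
    have hH := H ((j - (i + 1)) % (l.length + 1)) (Int.emod_nonneg _ hpos.ne')
      (by have := Int.emod_lt_of_pos (j - (i + 1)) hpos; omega)
    have key : ∀ c : ℤ, cyc L (i + 1 + (j - (i + 1)) % (l.length + 1) + c) = cyc L (j + c) := by
      intro c
      rw [← cyc_emod L, ← cyc_emod L (j + c), hlen]
      congr 1
      push_cast
      rw [show (i : ℤ) + 1 + (j - (i + 1)) % (l.length + 1) + c =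
        (j - (i + 1)) % (l.length + 1) + (i + 1 + c) by ring, Int.emod_add_emod]
      congr 1
      ring
    have k0 := key 0
    rw [add_zero, add_zero] at k0
    rwa [key 1, key 2, k0] at hH
  intro m hm0 hm
  obtain hm | hm | hm | hm : m = 0 ∨ (1 ≤ m ∧ m + 2 ≤ l.length) ∨ m + 1 = l.length ∨
    m = l.length := by omega
  · subst hm
    obtain ⟨hb, a, ha⟩ := h i
    rw [add_zero, h0, hs 1 (by omega) (by omega), hs 2 (by omega) (by omega), ha]
    refine ⟨?_, a - 1, ?_⟩
    · simp only [IsBasisZ2, det2, Prod.fst_add, Prod.snd_add] at hb ⊢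
      convert hb using 2 <;> ring
    · module
  · have e0 := hs m (by omega) (by omega)
    have e1 := hs (m + 1) (by omega) (by omega)
    have e2 := hs (m + 2) (by omega) (by omega)
    simp only [← add_assoc] at e1 e2
    rw [e0, e1, e2]
    exact h (i + m)
  · have e0 := hs m (by omega) (by omega)
    have e1 := hs (m + 1) (by omega) (by omega)
    have e2 := hper (i + 1)
    rw [h0] at e2
    have f1 := cyc_add_length l i
    have f2 := cyc_add_length l (i + 1)
    obtain ⟨hb, a, ha⟩ := h (i + m)
    rw [show (i : ℤ) + m + 1 = i + l.length by omega, f1] at hb ha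
    rw [show (i : ℤ) + m + 2 = i + 1 + l.length by omega, f2] at ha
    rw [show (i : ℤ) + (m + 1) = i + l.length by omega, f1, ← add_assoc] at e1
    rw [show (i : ℤ) + 1 + (l.length + 1) = i + 1 + m + 2 by omega] at e2
    rw [e0, e1, e2]
    refine ⟨hb, a - 1, ?_⟩
    rw [ha]
    module
  · have e0 := hs m (by omega) (by omega)
    have e1 := hper (i + 1)
    have e2 := hper (i + 1 + 1)
    rw [h0] at e1
    rw [hs 1 (by omega) (by omega)] at e2
    rw [show (i : ℤ) + m = i + l.length by omega, cyc_add_length] at e0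
    rw [show (i : ℤ) + 1 + (l.length + 1) = i + 1 + m + 1 by omega] at e1
    rw [show (i : ℤ) + 1 + 1 + (l.length + 1) = i + 1 + m + 2 by omega] at e2
    rw [e0, e1, e2]
    refine ⟨?_, -1, ?_⟩
    · have hb := (h i).1
      simp only [IsBasisZ2, det2, Prod.fst_add, Prod.snd_add] at hb ⊢
      convert hb using 2 <;> ring
    · module
end

section
/- Structure of minimal admissible multi-fans: let (v₁, …, v_k) be an admissible multi-fan in which every v_i is a unit vector of ℤ² (i.e., v_i ∈ {(1,0), (−1,0), (0,1), (0,−1)}). Then v_{i+1} = −v_{i−1} for every i (indices modulo k), and k is divisible by 4. -/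
theorem eq_neg_of_unit_vectors {v w u : ℤ × ℤ} {a : ℤ}
    (hv : v = (1, 0) ∨ v = (-1, 0) ∨ v = (0, 1) ∨ v = (0, -1))
    (hw : w = (1, 0) ∨ w = (-1, 0) ∨ w = (0, 1) ∨ w = (0, -1))
    (hu : u = (1, 0) ∨ u = (-1, 0) ∨ u = (0, 1) ∨ u = (0, -1))
    (hb : IsBasisZ2 v w) (ha : u = -(a • w) - v) : u = -v := by
  rcases hv with rfl | rfl | rfl | rfl <;> rcases hw with rfl | rfl | rfl | rfl <;>
    rcases hu with rfl | rfl | rfl | rfl <;>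
    simp_all [IsBasisZ2, det2, Prod.ext_iff] <;> omega

theorem cyc_mem {l : List (ℤ × ℤ)} (hl : l ≠ []) (i : ℤ) : cyc l i ∈ l := by
  have hpos : 0 < (l.length : ℤ) := by exact_mod_cast List.length_pos_iff.2 hl
  have h1 := Int.emod_nonneg i hpos.ne'
  have h2 := Int.emod_lt_of_pos i hpos
  have h3 : (i % (l.length : ℤ)).toNat < l.length := by omega
  unfold cyc
  rw [List.getD_eq_getElem _ _ h3]
  exact List.getElem_mem h3

theorem not_isBasisZ2_self (v : ℤ × ℤ) : ¬ IsBasisZ2 v v := by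
  have h : det2 v v = 0 := by unfold det2; ring
  simp [IsBasisZ2, h]

theorem not_isBasisZ2_self_neg (v : ℤ × ℤ) : ¬ IsBasisZ2 v (-v) := by
  have h : det2 v (-v) = 0 := by simp only [det2, Prod.fst_neg, Prod.snd_neg]; ring
  simp [IsBasisZ2, h]

/-- Structure of minimal admissible multi-fans: in an admissible multi-fan in which every
vector is a unit vector of `ℤ²`, one has `v_{i+1} = -v_{i-1}` for every `i` (indices modulo
`k`), and `k` is divisible by `4`. -/
theorem stmt_6 (l : List (ℤ × ℤ)) (h : AdmissibleMultiFan l) (hmin : MinimalFan l) :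
    (∀ i : ℤ, cyc l (i + 2) = -cyc l i) ∧ 4 ∣ l.length := by
  -- On the empty list every `cyc` value is the default `(0, 0)`, which is in no basis.
  have hl : l ≠ [] := by
    rintro rfl
    have := (h 0).1
    simp [cyc, IsBasisZ2, det2] at this
  have hunit (i : ℤ) := hmin _ (cyc_mem hl i)
  have hneg (i : ℤ) : cyc l (i + 2) = -cyc l i := by
    obtain ⟨hb, a, ha⟩ := h i
    exact eq_neg_of_unit_vectors (hunit i) (hunit (i + 1)) (hunit (i + 2)) hb ha
  refine ⟨hneg, ?_⟩
  have hper : Function.Periodic (cyc l) 4 := fun i => by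
    rw [show i + 4 = i + 2 + 2 by ring, hneg, hneg, neg_neg]
  have hk : cyc l ((l.length : ℤ) % 4) = cyc l 0 := by
    have h1 : cyc l (l.length : ℤ) = cyc l 0 := by simp [cyc]
    rw [← h1, Int.emod_def, mul_comm]
    exact hper.sub_int_mul_eq _
  have h01 := (h 0).1
  have h2 := hneg 0
  have h3 := hneg 1
  norm_num at h01 h2 h3
  have hr : (l.length : ℤ) % 4 = 0 ∨ (l.length : ℤ) % 4 = 1 ∨ (l.length : ℤ) % 4 = 2 ∨
      (l.length : ℤ) % 4 = 3 := by omega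
  rcases hr with hr | hr | hr | hr <;> rw [hr] at hk
  · omega
  · rw [hk] at h01
    exact absurd h01 (not_isBasisZ2_self _)
  · rw [h2] at hk
    rcases hunit 0 with e | e | e | e <;> simp [e] at hk
  · have h1 : cyc l 1 = -cyc l 0 := by rw [← hk, h3, neg_neg]
    rw [h1] at h01
    exact absurd h01 (not_isBasisZ2_self_neg _)
end

section
/- Classification with three vectors: if (v₁, v₂, v₃) is an admissible multi-fan with exactly three vectors, then v₃ = −v₁ − v₂ (equivalently, v₁ + v₂ + v₃ = 0). -/
/-- Classification with three vectors: an admissible multi-fan `(v₁, v₂, v₃)` satisfies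
`v₃ = -v₁ - v₂`. -/
theorem stmt_7 (v₁ v₂ v₃ : ℤ × ℤ) (h : AdmissibleMultiFan [v₁, v₂, v₃]) :
    v₃ = -v₁ - v₂ := by
  obtain ⟨hbasis, a, ha⟩ := h 0
  obtain ⟨-, b, hb⟩ := h 1
  change IsBasisZ2 v₁ v₂ at hbasis
  change v₃ = -(a • v₂) - v₁ at ha
  have e₁ : cyc [v₁, v₂, v₃] 1 = v₂ := rfl
  have e₂ : cyc [v₁, v₂, v₃] (1 + 1) = v₃ := rfl
  have e₃ : cyc [v₁, v₂, v₃] (1 + 2) = v₁ := by simp [cyc]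
  rw [e₁, e₂, e₃] at hb
  have hd : det2 v₁ v₂ ≠ 0 := by
    rcases hbasis with h | h <;> rw [h] <;> decide
  obtain ⟨x₁, y₁⟩ := v₁
  obtain ⟨x₂, y₂⟩ := v₂
  obtain ⟨x₃, y₃⟩ := v₃
  simp only [Prod.smul_mk, Prod.neg_mk, Prod.mk_sub_mk, Prod.mk.injEq, smul_eq_mul, det2]
    at ha hb hd ⊢
  obtain ⟨ha₁, ha₂⟩ := ha
  obtain ⟨hb₁, hb₂⟩ := hb
  -- Substituting `v₃ = -a v₂ - v₁` into `v₁ = -b v₃ - v₂` and pairing with `v₂` under the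
  -- determinant gives `det(v₁, v₂) = b det(v₁, v₂)`.
  have hb_one : b = 1 := by
    subst ha₁ ha₂
    have : (b - 1) * (x₁ * y₂ - y₁ * x₂) = 0 := by
      linear_combination (-y₂) * hb₁ + x₂ * hb₂
    rcases mul_eq_zero.mp this with h | h
    · omega
    · exact absurd h hd
  subst hb_one
  constructor <;> omega
end

section
/- Classification with four vectors: if (w₁, w₂, w₃, w₄) is an admissible multi-fan with exactly four vectors, then w₃ = −w₁ or w₄ = −w₂; consequently, up to cyclic relabeling, the multi-fan has the form (v₁, v₂, −v₁ + a·v₂, −v₂) for some basis v₁, v₂ of ℤ² and some integer a. -/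
/-- The recursion of a multi-fan preserves the determinant of consecutive vectors. -/
theorem det2_step {x y z : ℤ × ℤ} {a : ℤ} (h : z = -(a • y) - x) : det2 y z = det2 x y := by
  subst h
  simp only [det2, Prod.fst_sub, Prod.snd_sub, Prod.fst_neg, Prod.snd_neg, Prod.smul_fst,
    Prod.smul_snd, smul_eq_mul]
  ring

/-- Classification with four vectors: an admissible multi-fan `(w₁, w₂, w₃, w₄)` satisfies
`w₃ = -w₁` or `w₄ = -w₂`; consequently, up to cyclic relabeling it has the form
`(v₁, v₂, -v₁ + a • v₂, -v₂)` for some basis `v₁, v₂` of `ℤ²` and some integer `a`. -/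
theorem stmt_8 (w₁ w₂ w₃ w₄ : ℤ × ℤ) (h : AdmissibleMultiFan [w₁, w₂, w₃, w₄]) :
    (w₃ = -w₁ ∨ w₄ = -w₂) ∧
      ∃ (v₁ v₂ : ℤ × ℤ) (a : ℤ) (r : ℕ),
        IsBasisZ2 v₁ v₂ ∧
          [w₁, w₂, w₃, w₄].rotate r = [v₁, v₂, -v₁ + a • v₂, -v₂] := by
  obtain ⟨h12, a, ha⟩ : IsBasisZ2 w₁ w₂ ∧ ∃ a : ℤ, w₃ = -(a • w₂) - w₁ := h 0
  obtain ⟨b, hb⟩ : ∃ b : ℤ, w₄ = -(b • w₃) - w₂ := (h 1).2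
  have c4 : cyc [w₁, w₂, w₃, w₄] (2 + 2) = w₁ := by simp [cyc]
  have c4' : cyc [w₁, w₂, w₃, w₄] (3 + 1) = w₁ := by simp [cyc]
  have c5 : cyc [w₁, w₂, w₃, w₄] (3 + 2) = w₂ := by simp [cyc]
  obtain ⟨c, hc⟩ : ∃ c : ℤ, w₁ = -(c • w₄) - w₃ := c4 ▸ (h 2).2
  have hw := h 3
  rw [c4', c5] at hw
  obtain ⟨h41, d, hd⟩ : IsBasisZ2 w₄ w₁ ∧ ∃ d : ℤ, w₂ = -(d • w₁) - w₄ := hw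
  have hdet : det2 w₄ w₁ = det2 w₁ w₂ :=
    (det2_step hc).trans ((det2_step hb).trans (det2_step ha))
  have hexp : det2 w₄ w₁ = (1 - a * b) * det2 w₁ w₂ := by
    rw [hb, ha]
    simp only [det2, Prod.fst_sub, Prod.snd_sub, Prod.fst_neg, Prod.snd_neg, Prod.smul_fst,
      Prod.smul_snd, smul_eq_mul]
    ring
  have hab : a * b = 0 := by
    rcases h12 with h1 | h1 <;> rw [h1] at hdet hexp <;> linarith
  rcases mul_eq_zero.mp hab with rfl | rfl
  · have h3 : w₃ = -w₁ := by simpa using ha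
    -- The opposite pair `w₁, w₃` must occupy positions two and four, hence the rotation by `3`.
    refine ⟨Or.inl h3, w₄, w₁, -d, 3, h41, ?_⟩
    have h2 : w₂ = -w₄ + -d • w₁ := by rw [neg_smul, neg_add_eq_sub]; exact hd
    rw [← h2, ← h3]
    rfl
  · have h4 : w₄ = -w₂ := by simpa using hb
    refine ⟨Or.inr h4, w₁, w₂, -a, 0, h12, ?_⟩
    have h3 : w₃ = -w₁ + -a • w₂ := by rw [neg_smul, neg_add_eq_sub]; exact ha
    rw [List.rotate_zero, ← h3, ← h4]
end

section
/- Every admissible multi-fan can be transformed by a finite sequence of blow ups and blow downs into a minimal multi-fan: for every admissible multi-fan V there exists an admissible multi-fan V' in which every vector is a unit vector of ℤ², such that V' is obtained from V by finitely many steps, each step being either a blow up at some index or a blow down at some index. -/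
/-- A cyclic list opened up into a closed path, with its first entry repeated at the end, so that
the cyclically consecutive pairs of `l` are the consecutive pairs of `closedPath l`. -/
def closedPath (l : List (ℤ × ℤ)) : List (ℤ × ℤ) := l ++ l.take 1

/-- The vectors `u` and `w` lie in a common closed quadrant. -/
def QuadrantMates (u w : ℤ × ℤ) : Prop := 0 ≤ u.1 * w.1 ∧ 0 ≤ u.2 * w.2

/-- The `ℓ¹`-norm of a lattice vector. -/
def l1norm (v : ℤ × ℤ) : ℕ := v.1.natAbs + v.2.natAbs

/-- The vector `v` is one of the four unit vectors of `ℤ²`. -/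
def IsUnitVec (v : ℤ × ℤ) : Prop := v = (1, 0) ∨ v = (-1, 0) ∨ v = (0, 1) ∨ v = (0, -1)

/-- The failure of `u` and `w` to be quadrant-mates: the sum of the negative parts of the
coordinatewise products. -/
def cost (u w : ℤ × ℤ) : ℕ := (-(u.1 * w.1)).toNat + (-(u.2 * w.2)).toNat

/-- The total cost of the consecutive pairs of a path. -/
def pathCost : List (ℤ × ℤ) → ℕ
  | u :: w :: t => cost u w + pathCost (w :: t)
  | _ => 0

/-! ### Cyclic indexing and closed paths -/

lemma closedPath_getElem? {l : List (ℤ × ℤ)} (hl : l ≠ []) {j : ℕ} (hj : j ≤ l.length) :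
    (closedPath l)[j]? = some (cyc l j) := by
  obtain ⟨x, t, rfl⟩ := List.exists_cons_of_ne_nil hl
  rcases hj.lt_or_eq with hj | rfl
  · have : ((j : ℤ) % ((x :: t).length : ℤ)).toNat = j := by
      rw [Int.emod_eq_of_lt (by omega) (by omega)]; simp
    rw [closedPath, cyc, this, List.getElem?_append_left hj, List.getElem?_eq_getElem hj,
      List.getD_eq_getElem _ _ hj]
  · simp [closedPath, cyc]

lemma closedPath_append_cons (A : List (ℤ × ℤ)) (u : ℤ × ℤ) (C : List (ℤ × ℤ)) :
    closedPath (A ++ u :: C) = A ++ u :: (C ++ (A ++ [u]).take 1) := by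
  cases A <;> simp [closedPath]

lemma cyc_append_cons (A : List (ℤ × ℤ)) (u : ℤ × ℤ) (C : List (ℤ × ℤ)) :
    cyc (A ++ u :: C) A.length = u := by
  have h := closedPath_getElem? (l := A ++ u :: C) (by simp) (j := A.length) (by simp)
  rw [closedPath_append_cons] at h
  simpa using h.symm

lemma cyc_append_cons_succ {A : List (ℤ × ℤ)} {u : ℤ × ℤ} {C : List (ℤ × ℤ)} {w : ℤ × ℤ}
    {B : List (ℤ × ℤ)} (hw : C ++ (A ++ [u]).take 1 = w :: B) :
    cyc (A ++ u :: C) ((A.length : ℤ) + 1) = w := by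
  have h := closedPath_getElem? (l := A ++ u :: C) (by simp) (j := A.length + 1) (by simp)
  rw [closedPath_append_cons, hw, List.getElem?_append_right (by simp)] at h
  simpa using h.symm

lemma forall_cyc_iff {l : List (ℤ × ℤ)} (hl : l ≠ []) (R : ℤ × ℤ → ℤ × ℤ → Prop) :
    (∀ i : ℤ, R (cyc l i) (cyc l (i + 1))) ↔ (closedPath l).IsChain R := by
  have hpos : 0 < l.length := List.length_pos_iff.2 hl
  have hlen : (closedPath l).length = l.length + 1 := by
    simp [closedPath]; omega
  have key : ∀ j : ℕ, ∀ h : j < (closedPath l).length, (closedPath l)[j] = cyc l j := by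
    intro j h
    have := closedPath_getElem? hl (j := j) (by omega)
    rw [List.getElem?_eq_getElem h] at this
    exact Option.some.inj this
  rw [List.isChain_iff_getElem]
  constructor
  · intro h j hj
    rw [key, key]
    exact_mod_cast h j
  · intro h i
    have h0 : 0 ≤ i % (l.length : ℤ) := Int.emod_nonneg _ (by omega)
    have h1 : i % (l.length : ℤ) < l.length := Int.emod_lt_of_pos _ (by omega)
    obtain ⟨j, hj⟩ := Int.eq_ofNat_of_zero_le h0
    have := h j (by omega)
    rw [key, key] at this
    have e1 : cyc l i = cyc l j := by simp [cyc, ← hj]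
    have e2 : cyc l (i + 1) = cyc l ((j + 1 : ℕ) : ℤ) := by
      push_cast
      simp [cyc, ← hj]
    rwa [e1, e2]

/-- Given (1), condition (2) at `i` amounts to `det (v_i, v_{i+1}) = det (v_{i-1}, v_i)`: the
converse direction uses `a_i = -(ε * det (v_{i-1}, v_{i+1}))`. Nonemptiness holds because the
default value `(0, 0)` of `cyc` on the empty list is in no basis. -/
lemma admissible_iff (l : List (ℤ × ℤ)) :
    AdmissibleMultiFan l ↔
      l ≠ [] ∧ ∃ ε : ℤ, (ε = 1 ∨ ε = -1) ∧ (closedPath l).IsChain (fun u w => det2 u w = ε) := by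
  constructor
  · intro h
    have hl : l ≠ [] := by
      rintro rfl
      have := (h 0).1
      simp [IsBasisZ2, cyc, det2] at this
    have step : ∀ i : ℤ, det2 (cyc l (i + 1)) (cyc l (i + 1 + 1)) =
        det2 (cyc l i) (cyc l (i + 1)) := by
      intro i
      obtain ⟨a, ha⟩ := (h i).2
      rw [show i + 1 + 1 = i + 2 by ring, ha]
      simp only [det2, Prod.fst_sub, Prod.snd_sub, Prod.fst_neg, Prod.snd_neg, Prod.smul_fst,
        Prod.smul_snd, smul_eq_mul]
      ring
    refine ⟨hl, det2 (cyc l 0) (cyc l (0 + 1)), (h 0).1, (forall_cyc_iff hl _).1 fun i => ?_⟩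
    induction i using Int.induction_on with
    | zero => rfl
    | succ i ih => rw [step, ih]
    | pred i ih =>
      rw [← ih, ← step]
      simp
  · rintro ⟨hl, ε, hε, hc⟩ i
    rw [← forall_cyc_iff hl] at hc
    have h1 := hc i
    have h2 := hc (i + 1)
    rw [show i + 1 + 1 = i + 2 by ring] at h2
    refine ⟨by rcases hε with rfl | rfl <;> simp [IsBasisZ2, h1],
      -(ε * det2 (cyc l i) (cyc l (i + 2))), ?_⟩
    generalize cyc l i = u at *
    generalize cyc l (i + 1) = v at *
    generalize cyc l (i + 2) = w at *
    obtain ⟨u1, u2⟩ := u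
    obtain ⟨v1, v2⟩ := v
    obtain ⟨w1, w2⟩ := w
    simp only [det2] at *
    rcases hε with rfl | rfl
    · ext
      · simp
        linear_combination -u1 * h2 - w1 * h1
      · simp
        linear_combination -u2 * h2 - w2 * h1
    · ext
      · simp
        linear_combination u1 * h2 + w1 * h1
      · simp
        linear_combination u2 * h2 + w2 * h1

/-! ### Blowing up until neighbours share a quadrant -/

lemma blowUp_append_cons {A : List (ℤ × ℤ)} {u : ℤ × ℤ} {C : List (ℤ × ℤ)} {w : ℤ × ℤ}
    {B : List (ℤ × ℤ)} (hw : C ++ (A ++ [u]).take 1 = w :: B) :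
    BlowUp (A ++ u :: C) (A ++ u :: (u + w) :: C) := by
  refine ⟨A.length, by simp, ?_⟩
  rw [cyc_append_cons, cyc_append_cons_succ hw]
  simp [List.take_append, List.drop_append, List.take_of_length_le, List.drop_of_length_le]

lemma pathCost_append (A : List (ℤ × ℤ)) (u : ℤ × ℤ) (B : List (ℤ × ℤ)) :
    pathCost (A ++ u :: B) = pathCost (A ++ [u]) + pathCost (u :: B) := by
  induction A with
  | nil => simp [pathCost]
  | cons a A ih =>
    cases A with
    | nil => simp [pathCost]
    | cons b A =>
      simp only [List.cons_append, pathCost] at ih ⊢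
      omega

/-- If `x` and `y` have opposite signs, then `x + y` is zero or has the sign of the longer
one and is shorter than it, so splitting `x, y` at `x + y` lowers the negative part of the product. -/
lemma negPart_split (x y : ℤ) :
    (-(x * (x + y))).toNat + (-((x + y) * y)).toNat ≤ (-(x * y)).toNat ∧
    (x * y < 0 →
      (-(x * (x + y))).toNat + (-((x + y) * y)).toNat < (-(x * y)).toNat) := by
  have e1 : x * (x + y) = x * x + x * y := by ring
  have e2 : (x + y) * y = x * y + y * y := by ring
  have hx : 0 ≤ x * x := mul_self_nonneg x
  have hy : 0 ≤ y * y := mul_self_nonneg y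
  rcases le_or_gt 0 (x * y) with h | h
  · rw [e1, e2]; omega
  · have hx0 : x ≠ 0 := by rintro rfl; simp at h
    have hy0 : y ≠ 0 := by rintro rfl; simp at h
    have hx' : 0 < x * x := by positivity
    have hy' : 0 < y * y := by positivity
    -- the two products cannot both be negative
    have hs : 0 ≤ x * (x + y) ∨ 0 ≤ (x + y) * y := by
      by_contra! hc
      nlinarith [mul_pos_of_neg_of_neg hc.1 hc.2, mul_nonpos_of_nonpos_of_nonneg h.le
        (sq_nonneg (x + y))]
    rw [e1, e2] at *
    omega

lemma cost_split_lt {u w : ℤ × ℤ} (h : ¬ QuadrantMates u w) :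
    cost u (u + w) + cost (u + w) w < cost u w := by
  have h1 := negPart_split u.1 w.1
  have h2 := negPart_split u.2 w.2
  simp only [QuadrantMates, cost, Prod.fst_add, Prod.snd_add] at *
  by_cases h3 : u.1 * w.1 < 0
  · have := h1.2 h3
    omega
  · have := h2.2 (by by_contra h4; exact h ⟨by omega, by omega⟩)
    omega

lemma exists_quadrantal {ε : ℤ} (n : ℕ) : ∀ l : List (ℤ × ℤ), l ≠ [] →
    pathCost (closedPath l) = n → (closedPath l).IsChain (fun u w => det2 u w = ε) →
    ∃ l', Relation.ReflTransGen (fun a b => BlowUp a b ∨ BlowDown a b) l l' ∧ l' ≠ [] ∧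
      (closedPath l').IsChain (fun u w => det2 u w = ε ∧ QuadrantMates u w) := by
  induction n using Nat.strong_induction_on with
  | _ n ih =>
  intro l hl hn hc
  by_cases hq : (closedPath l).IsChain (fun u w => det2 u w = ε ∧ QuadrantMates u w)
  · exact ⟨l, .refl, hl, hq⟩
  obtain ⟨A, u, C, w, B, rfl, hw, huw⟩ : ∃ A u C w B, l = A ++ u :: C ∧
      C ++ (A ++ [u]).take 1 = w :: B ∧ ¬ QuadrantMates u w := by
    by_contra! hcon
    apply hq
    rw [List.isChain_iff_getElem] at hc ⊢
    intro i hi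
    refine ⟨hc i hi, ?_⟩
    have hil : i < l.length := by
      simp only [closedPath, List.length_append, List.length_take] at hi
      omega
    have hsplit : l = l.take i ++ l[i] :: l.drop (i + 1) := by simp
    cases hw : l.drop (i + 1) ++ (l.take i ++ [l[i]]).take 1 with
    | nil =>
      simp at hw
      exact absurd hw.2 hl
    | cons w B =>
      have hq := hcon _ _ _ w B hsplit hw
      have hp : closedPath l = l.take i ++ l[i] :: w :: B := by
        conv_lhs => rw [hsplit]
        rw [closedPath_append_cons, hw]
      have e1 : (closedPath l)[i]? = some l[i] := by
        rw [hp, List.getElem?_append_right (by simp)]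
        simp [hil.le]
      have e2 : (closedPath l)[i + 1]? = some w := by
        rw [hp, List.getElem?_append_right (by simp)]
        simp [hil.le]
      rw [List.getElem?_eq_getElem (by omega)] at e1 e2
      rw [Option.some.inj e1, Option.some.inj e2]
      exact hq
  have hp : closedPath (A ++ u :: C) = A ++ u :: w :: B := by rw [closedPath_append_cons, hw]
  have hp' : closedPath (A ++ u :: (u + w) :: C) = A ++ u :: (u + w) :: w :: B := by
    rw [closedPath_append_cons, List.cons_append, hw]
  rw [hp] at hn hc
  obtain ⟨l', h1, h2⟩ := ih (pathCost (closedPath (A ++ u :: (u + w) :: C))) (by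
    have := cost_split_lt huw
    rw [← hn, hp', pathCost_append, pathCost_append A u (w :: B)]
    simp only [pathCost]
    omega) _ (by simp) rfl (by
    rw [hp']
    rw [List.isChain_split] at hc ⊢
    simp only [List.isChain_cons_cons] at hc ⊢
    obtain ⟨hA, hd, hB⟩ := hc
    refine ⟨hA, ?_, ?_, hB⟩ <;>
    · simp only [det2, Prod.fst_add, Prod.snd_add] at hd ⊢
      linear_combination hd)
  exact ⟨l', .head (.inl (blowUp_append_cons hw)) h1, h2⟩

/-! ### Blowing down the longest vectors -/

/-- A vector that belongs to a basis of `ℤ²` and lies on a coordinate axis is a unit vector. -/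
lemma isUnit_of_axis {u v : ℤ × ℤ} {ε : ℤ} (hε : ε = 1 ∨ ε = -1) (h : det2 u v = ε)
    (hv : v.1 = 0 ∨ v.2 = 0) : IsUnitVec v := by
  obtain ⟨u1, u2⟩ := u
  obtain ⟨a, b⟩ := v
  simp only [det2] at *
  have hu : IsUnit ε := Int.isUnit_iff.2 hε
  rcases hv with rfl | rfl
  · have : IsUnit b := isUnit_of_dvd_unit ⟨u1, by rw [← h]; ring⟩ hu
    rcases Int.isUnit_iff.1 this with rfl | rfl <;> simp [IsUnitVec]
  · have : IsUnit a := isUnit_of_dvd_unit ⟨-u2, by rw [← h]; ring⟩ hu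
    rcases Int.isUnit_iff.1 this with rfl | rfl <;> simp [IsUnitVec]

/-- The open-quadrant case of `eq_add_of_max`, with all signs normalised to be positive. -/
lemma eq_one_of_max_pos {a b c d e f k ε : ℤ} (hε : ε = 1 ∨ ε = -1) (ha : 0 ≤ a) (hb : 0 ≤ b)
    (hc : 0 < c) (hd : 0 < d) (he : 0 ≤ e) (hf : 0 ≤ f) (hdet : a * d - b * c = ε)
    (h1 : a + e = k * c) (h2 : b + f = k * d) (hu : a + b ≤ c + d) (hw : e + f ≤ c + d) :
    k = 1 := by
  have hk0 : 0 ≤ k := by nlinarith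
  have hk2 : k ≤ 2 := by nlinarith
  interval_cases k
  · obtain rfl : a = 0 := by omega
    obtain rfl : b = 0 := by omega
    omega
  · rfl
  · have : a + b = c + d := by omega
    have hdvd : c + d ∣ ε := ⟨a - c, by rw [← hdet, show b = c + d - a by omega]; ring⟩
    have hu : IsUnit (c + d) := isUnit_of_dvd_unit hdvd (Int.isUnit_iff.2 hε)
    rcases Int.isUnit_iff.1 hu with h | h <;> omega

/-- Let the neighbours of a non-unit vector `v` be quadrant-mates of `v`, and let those that are
not unit vectors be at most as `ℓ¹`-long as `v`. Then `v` is the sum of its neighbours, which satisfy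
the same relation with each other as they do with `v`. -/
lemma eq_add_of_max {u v w : ℤ × ℤ} {ε : ℤ} (hε : ε = 1 ∨ ε = -1)
    (huv : det2 u v = ε ∧ QuadrantMates u v) (hvw : det2 v w = ε ∧ QuadrantMates v w)
    (hv : ¬ IsUnitVec v)
    (hu : ¬ IsUnitVec u → l1norm u ≤ l1norm v) (hw : ¬ IsUnitVec w → l1norm w ≤ l1norm v) :
    v = u + w ∧ det2 u w = ε ∧ QuadrantMates u w := by
  have hax : v.1 ≠ 0 ∧ v.2 ≠ 0 := by
    rw [← not_or]
    exact fun h => hv (isUnit_of_axis hε huv.1 h)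
  have hle : ∀ x, (¬ IsUnitVec x → l1norm x ≤ l1norm v) → l1norm x ≤ l1norm v := by
    intro x hx
    by_cases h : IsUnitVec x
    · have h1 : l1norm x = 1 := by rcases h with rfl | rfl | rfl | rfl <;> rfl
      have h2 : 1 ≤ l1norm v := by
        have := Int.natAbs_pos.2 hax.1
        unfold l1norm
        omega
      omega
    · exact hx h
  replace hu := hle u hu
  replace hw := hle w hw
  clear hv hle
  obtain ⟨a, b⟩ := u
  obtain ⟨c, d⟩ := v
  obtain ⟨e, f⟩ := w
  simp only [det2, QuadrantMates, l1norm, Prod.mk_add_mk, Prod.mk.injEq] at *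
  obtain ⟨d1, q1, q2⟩ := huv
  obtain ⟨d2, q3, q4⟩ := hvw
  obtain ⟨k, h1, h2⟩ : ∃ k, a + e = k * c ∧ b + f = k * d := by
    refine ⟨ε * (a * f - b * e), ?_, ?_⟩
    · rcases hε with rfl | rfl
      · linear_combination -a * d2 - e * d1
      · linear_combination a * d2 + e * d1
    · rcases hε with rfl | rfl
      · linear_combination -b * d2 - f * d1
      · linear_combination b * d2 + f * d1
  have hε' : -ε = 1 ∨ -ε = -1 := by omega
  have hk : k = 1 ∧ 0 ≤ a * e ∧ 0 ≤ b * f := by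
    rcases hax.1.lt_or_gt with hc | hc <;> rcases hax.2.lt_or_gt with hd | hd
    · have := nonpos_of_mul_nonneg_left q1 hc
      have := nonpos_of_mul_nonneg_left q2 hd
      have := nonpos_of_mul_nonneg_right q3 hc
      have := nonpos_of_mul_nonneg_right q4 hd
      exact ⟨eq_one_of_max_pos (a := -a) (b := -b) (c := -c) (d := -d) (e := -e) (f := -f) hε
        (by omega) (by omega) (by omega) (by omega) (by omega) (by omega) (by linarith)
        (by linarith) (by linarith) (by omega) (by omega), by nlinarith, by nlinarith⟩
    · have := nonpos_of_mul_nonneg_left q1 hc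
      have := nonneg_of_mul_nonneg_left q2 hd
      have := nonpos_of_mul_nonneg_right q3 hc
      have := nonneg_of_mul_nonneg_right q4 hd
      exact ⟨eq_one_of_max_pos (a := -a) (b := b) (c := -c) (d := d) (e := -e) (f := f) hε'
        (by omega) (by omega) (by omega) (by omega) (by omega) (by omega) (by linarith)
        (by linarith) (by linarith) (by omega) (by omega), by nlinarith, by nlinarith⟩
    · have := nonneg_of_mul_nonneg_left q1 hc
      have := nonpos_of_mul_nonneg_left q2 hd
      have := nonneg_of_mul_nonneg_right q3 hc
      have := nonpos_of_mul_nonneg_right q4 hd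
      exact ⟨eq_one_of_max_pos (a := a) (b := -b) (c := c) (d := -d) (e := e) (f := -f) hε'
        (by omega) (by omega) (by omega) (by omega) (by omega) (by omega) (by linarith)
        (by linarith) (by linarith) (by omega) (by omega), by nlinarith, by nlinarith⟩
    · have := nonneg_of_mul_nonneg_left q1 hc
      have := nonneg_of_mul_nonneg_left q2 hd
      have := nonneg_of_mul_nonneg_right q3 hc
      have := nonneg_of_mul_nonneg_right q4 hd
      exact ⟨eq_one_of_max_pos (a := a) (b := b) (c := c) (d := d) (e := e) (f := f) hε
        (by omega) (by omega) (by omega) (by omega) (by omega) (by omega) (by linarith)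
        (by linarith) (by linarith) (by omega) (by omega), by nlinarith, by nlinarith⟩
  obtain ⟨rfl, hae, hbf⟩ := hk
  rw [one_mul] at h1 h2
  subst h1 h2
  exact ⟨⟨rfl, rfl⟩, by linarith, hae, hbf⟩

lemma blowDown_append_cons {A : List (ℤ × ℤ)} {u v : ℤ × ℤ} {C : List (ℤ × ℤ)} {w : ℤ × ℤ}
    {B : List (ℤ × ℤ)} (hw : C ++ (A ++ [u]).take 1 = w :: B) (hv : v = u + w) :
    BlowDown (A ++ u :: v :: C) (A ++ u :: C) := by
  have e : A ++ u :: v :: C = (A ++ [u]) ++ v :: C := by simp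
  have hi : (((A ++ [u]).length : ℕ) : ℤ) - 1 = A.length := by simp
  have hw' : C ++ ((A ++ [u]) ++ [v]).take 1 = w :: B := by
    rw [← hw]; cases A <;> simp
  refine ⟨(A ++ [u]).length, by simp, ?_, ?_⟩
  · rw [hi, cyc_append_cons A u (v :: C), e, cyc_append_cons, cyc_append_cons_succ hw', hv]
  · rw [e, List.eraseIdx_append_of_length_le le_rfl]
    simp

/-- Blowing down the vector at index `0`, whose predecessor is the last entry of the list. -/
lemma blowDown_head {D C : List (ℤ × ℤ)} {u v w : ℤ × ℤ} (hC : D ++ [u] = w :: C)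
    (hv : v = u + w) : BlowDown (v :: (D ++ [u])) (D ++ [u]) := by
  refine ⟨0, by simp, ?_, by simp⟩
  have h0 : cyc (v :: (D ++ [u])) ((0 : ℕ) : ℤ) = v := cyc_append_cons [] v (D ++ [u])
  have h1 : cyc (v :: (D ++ [u])) (((0 : ℕ) : ℤ) + 1) = w :=
    cyc_append_cons_succ (A := []) (B := C ++ [v]) (by simp [hC])
  have h2 : cyc (v :: (D ++ [u])) (((0 : ℕ) : ℤ) - 1) = u := by
    have h := cyc_append_cons (v :: D) u []
    have hm : (((0 : ℕ) : ℤ) - 1) % ((v :: (D ++ [u])).length : ℤ) =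
        ((v :: D).length : ℤ) % ((v :: (D ++ [u])).length : ℤ) := by
      rw [← Int.add_emod_right]
      congr 1
      simp
    rw [List.cons_append] at h
    unfold cyc at h ⊢
    rw [hm]
    exact h
  rw [h0, h1, h2, hv]

lemma exists_minimal {ε : ℤ} (hε : ε = 1 ∨ ε = -1) (n : ℕ) : ∀ l : List (ℤ × ℤ), l ≠ [] →
    l.length = n →
    (closedPath l).IsChain (fun u w => det2 u w = ε ∧ QuadrantMates u w) →
    ∃ l', Relation.ReflTransGen (fun a b => BlowUp a b ∨ BlowDown a b) l l' ∧ l' ≠ [] ∧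
      (closedPath l').IsChain (fun u w => det2 u w = ε ∧ QuadrantMates u w) ∧ MinimalFan l' := by
  induction n with
  | zero =>
    intro l hl hn
    exact absurd (List.length_eq_zero_iff.1 hn) hl
  | succ n ih =>
  intro l hl hn hc
  by_cases hmin : MinimalFan l
  · exact ⟨l, .refl, hl, hc, hmin⟩
  obtain ⟨v, hvl, hv, hmax⟩ : ∃ v ∈ l, ¬ IsUnitVec v ∧
      ∀ x ∈ l, ¬ IsUnitVec x → l1norm x ≤ l1norm v := by
    classical
    simp only [MinimalFan, not_forall] at hmin
    obtain ⟨v₀, hv₀, hv₀'⟩ := hmin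
    obtain ⟨v, hv, hm⟩ := Finset.exists_max_image (l.toFinset.filter fun x => ¬ IsUnitVec x)
      l1norm ⟨v₀, by simp only [Finset.mem_filter, List.mem_toFinset]; exact ⟨hv₀, hv₀'⟩⟩
    simp only [Finset.mem_filter, List.mem_toFinset] at hv hm
    exact ⟨v, hv.1, hv.2, fun x hx hx' => hm x ⟨hx, hx'⟩⟩
  obtain ⟨A, C, rfl⟩ := List.append_of_mem hvl
  rcases List.eq_nil_or_concat' A with rfl | ⟨A, u, rfl⟩
  ·
    -- `v` is at index `0`, so its predecessor is the last entry of the list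
    rcases List.eq_nil_or_concat' C with rfl | ⟨D, u, rfl⟩
    · exfalso
      have h0 : det2 v v = ε := by simpa [closedPath] using (hc.imp fun _ _ h => h.1)
      have : det2 v v = 0 := by simp only [det2]; ring
      omega
    obtain ⟨w, B, hB⟩ := List.exists_cons_of_ne_nil (show D ++ [u] ≠ [] by simp)
    have hc1 : (v :: (D ++ [u] ++ [v])).IsChain
        (fun u w => det2 u w = ε ∧ QuadrantMates u w) := by simpa [closedPath] using hc
    have hvw : det2 v w = ε ∧ QuadrantMates v w := by
      rw [hB, List.cons_append, List.isChain_cons_cons] at hc1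
      exact hc1.1
    have hc2 := hc1.tail
    simp only [List.tail_cons, List.append_assoc, List.cons_append, List.nil_append] at hc2
    rw [List.isChain_split] at hc2
    have huv : det2 u v = ε ∧ QuadrantMates u v := by simpa using hc2.2
    have hwl : w ∈ D ++ [u] := by simp [hB]
    obtain ⟨hsum, huw⟩ := eq_add_of_max hε huv hvw hv (hmax u (by simp))
      (hmax w (List.mem_cons_of_mem _ hwl))
    obtain ⟨l', h1, h2⟩ := ih (D ++ [u]) (by simp) (by simpa using hn) (by
      have : closedPath (D ++ [u]) = D ++ u :: [w] := by
        have : (D ++ [u]).take 1 = [w] := by simp [hB]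
        rw [closedPath, this, List.append_assoc, List.singleton_append]
      rw [this, List.isChain_split]
      exact ⟨hc2.1, by simpa using huw⟩)
    exact ⟨l', .head (.inr (blowDown_head hB hsum)) h1, h2⟩
  · obtain ⟨w, B, hB⟩ := List.exists_cons_of_ne_nil
      (show C ++ (A ++ [u]).take 1 ≠ [] by simp)
    have hl' : A ++ [u] ++ v :: C = A ++ u :: v :: C := by simp
    rw [hl'] at hc hmax hn ⊢
    have hp : closedPath (A ++ u :: v :: C) = A ++ u :: v :: w :: B := by
      rw [closedPath_append_cons, List.cons_append, hB]
    have hwl : w ∈ A ++ u :: v :: C := by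
      have : w ∈ C ++ (A ++ [u]).take 1 := by simp [hB]
      rcases List.mem_append.1 this with h | h
      · simp [h]
      · have := List.mem_of_mem_take h
        simp only [List.mem_append, List.mem_cons, List.not_mem_nil, or_false] at this ⊢
        tauto
    rw [hp, List.isChain_split] at hc
    simp only [List.isChain_cons_cons] at hc
    obtain ⟨hA, huv, hvw, hwB⟩ := hc
    obtain ⟨hsum, huw⟩ := eq_add_of_max hε huv hvw hv (hmax u (by simp)) (hmax w hwl)
    obtain ⟨l', h1, h2⟩ := ih (A ++ u :: C) (by simp) (by simp at hn ⊢; omega) (by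
      rw [closedPath_append_cons, hB, List.isChain_split]
      exact ⟨hA, List.isChain_cons_cons.2 ⟨huw, hwB⟩⟩)
    exact ⟨l', .head (.inr (blowDown_append_cons hB hsum)) h1, h2⟩

/-- Every admissible multi-fan can be transformed by a finite sequence of blow ups and
blow downs into a minimal admissible multi-fan (all vectors unit vectors of `ℤ²`). -/
theorem stmt_9 (l : List (ℤ × ℤ)) (h : AdmissibleMultiFan l) :
    ∃ l' : List (ℤ × ℤ),
      Relation.ReflTransGen (fun a b => BlowUp a b ∨ BlowDown a b) l l' ∧
        AdmissibleMultiFan l' ∧ MinimalFan l' := by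
  obtain ⟨hl, ε, hε, hc⟩ := (admissible_iff l).1 h
  obtain ⟨l₁, hr₁, hl₁, hc₁⟩ := exists_quadrantal _ l hl rfl hc
  obtain ⟨l₂, hr₂, hl₂, hc₂, hmin⟩ := exists_minimal hε _ l₁ hl₁ rfl hc₁
  exact ⟨l₂, hr₁.trans hr₂, (admissible_iff l₂).2 ⟨hl₂, ε, hε, hc₂.imp fun _ _ h => h.1⟩, hmin⟩
end

section
/- Angle additivity under blow up: let z and w be nonzero complex numbers that are ℝ-linearly independent (i.e., w/z is not real). Then arg(w/z) = arg((z+w)/z) + arg(w/(z+w)), where arg denotes the principal argument with values in (−π, π]. (Consequently, inserting the sum v_i + v_{i+1} between consecutive vectors of a multi-fan, or deleting such a sum, does not change the total winding of the cyclic sequence around the origin.) -/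
/-!
Put `u = w / z`, `a = (z + w) / z = 1 + u` and `b = w / (z + w)`, so that `a * b = u`. Since
`im a = im u` and `im b = im u / |1 + u| ^ 2`, the three numbers `u`, `a`, `b` lie in the same open
half-plane. Hence their arguments all lie in `(0, π)` or all in `(-π, 0)`, so `arg u` differs from
`arg a + arg b` by less than `2π`; the two agree modulo `2π`, so they are equal.
-/

theorem arg_mul_of_im_pos {a b : ℂ} (ha : 0 < a.im) (hb : 0 < b.im) (hab : 0 < (a * b).im) :
    (a * b).arg = a.arg + b.arg := by
  have ne {x : ℂ} (hx : 0 < x.im) : x ≠ 0 := by rintro rfl; simp at hx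
  have pos {x : ℂ} (hx : 0 < x.im) : 0 ≤ x.arg := Complex.arg_nonneg_iff.2 hx.le
  have lt {x : ℂ} (hx : 0 < x.im) : x.arg < Real.pi :=
    Complex.arg_lt_pi_iff.2 (Or.inr hx.ne')
  have h := Complex.arg_mul_coe_angle (ne ha) (ne hb)
  rw [← Real.Angle.coe_add, Real.Angle.angle_eq_iff_two_pi_dvd_sub] at h
  obtain ⟨k, hk⟩ := h
  have h1 := pos ha; have h2 := pos hb; have h3 := pos hab
  have h4 := lt ha; have h5 := lt hb; have h6 := lt hab
  have hpi := Real.pi_pos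
  have k1 : (k : ℝ) < 1 := by nlinarith
  have k2 : (-1 : ℝ) < k := by nlinarith
  have k0 : k = 0 := by
    have : k < 1 := by exact_mod_cast k1
    have : -1 < k := by exact_mod_cast k2
    omega
  subst k0
  simp at hk
  linarith

theorem arg_mul_of_im_neg {a b : ℂ} (ha : a.im < 0) (hb : b.im < 0) (hab : (a * b).im < 0) :
    (a * b).arg = a.arg + b.arg := by
  have conj_arg {x : ℂ} (hx : x.im < 0) : (starRingEnd ℂ x).arg = -x.arg := by
    rw [Complex.arg_conj, if_neg]
    exact fun h => hx.ne (Complex.arg_eq_pi_iff.1 h).2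
  have h := arg_mul_of_im_pos (a := starRingEnd ℂ a) (b := starRingEnd ℂ b)
    (by simpa using ha) (by simpa using hb) (by rw [← map_mul, Complex.conj_im]; linarith)
  rw [← map_mul, conj_arg ha, conj_arg hb, conj_arg hab] at h
  linarith

/-- Angle additivity under blow up: if `z` and `w` are nonzero complex numbers that are
`ℝ`-linearly independent (i.e. `w / z` is not real), then
`arg (w / z) = arg ((z + w) / z) + arg (w / (z + w))`,
where `arg` is the principal argument with values in `(-π, π]`. -/
theorem stmt_11 (z w : ℂ) (hz : z ≠ 0) (hw : w ≠ 0) (hindep : (w / z).im ≠ 0) :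
    Complex.arg (w / z) = Complex.arg ((z + w) / z) + Complex.arg (w / (z + w)) := by
  have ha : ((z + w) / z).im = (w / z).im := by
    rw [add_div, div_self hz]; simp
  have hs : z + w ≠ 0 := by
    intro h
    rw [h] at ha
    simp at ha
    exact hindep ha.symm
  have hmul : (z + w) / z * (w / (z + w)) = w / z := by field_simp
  have hu : 1 + w / z ≠ 0 := by
    have : 1 + w / z = (z + w) / z := by field_simp
    rw [this]; exact div_ne_zero hs hz
  have hN : 0 < Complex.normSq (1 + w / z) := Complex.normSq_pos.2 hu
  have hb : (w / (z + w)).im = (w / z).im / Complex.normSq (1 + w / z) := by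
    have : w / (z + w) = w / z / (1 + w / z) := by field_simp
    rw [this, Complex.div_im]
    simp only [Complex.add_re, Complex.add_im, Complex.one_re, Complex.one_im]
    ring
  rw [← hmul]
  rcases lt_or_gt_of_ne hindep with h | h
  · exact arg_mul_of_im_neg (ha ▸ h) (hb ▸ div_neg_of_neg_of_pos h hN) (hmul.symm ▸ h)
  · exact arg_mul_of_im_pos (ha ▸ h) (hb ▸ div_pos h hN) (hmul.symm ▸ h)
end

section
/- Strict norm decrease at a maximal vector: let (v₁, …, v_k) be an admissible multi-fan and suppose ‖v_i‖ = max_j ‖v_j‖ > 1 for some index i. Then ‖v_{i−1}‖ < ‖v_i‖ and ‖v_{i+1}‖ < ‖v_i‖ (indices modulo k). -/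
theorem znorm_le_one_of_isBasisZ2 {v w : ℤ × ℤ} (hb : IsBasisZ2 v w)
    (he : znorm v = znorm w) : znorm v ≤ 1 := by
  obtain ⟨a, b⟩ := v
  obtain ⟨c, d⟩ := w
  simp only [IsBasisZ2, det2] at hb
  simp only [znorm] at he ⊢
  rw [Real.sqrt_inj (by positivity) (by positivity)] at he
  rw [Real.sqrt_le_one]
  norm_cast at he ⊢
  have hdet : (a * d - b * c) ^ 2 = 1 := by
    rcases hb with hb | hb <;> rw [hb] <;> norm_num
  have hlag : (a ^ 2 + b ^ 2) ^ 2 = (a * c + b * d) ^ 2 + 1 := by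
    calc (a ^ 2 + b ^ 2) ^ 2 = (a ^ 2 + b ^ 2) * (c ^ 2 + d ^ 2) := by rw [← he]; ring
      _ = (a * c + b * d) ^ 2 + (a * d - b * c) ^ 2 := by ring
      _ = _ := by rw [hdet]
  have hn : 0 ≤ a ^ 2 + b ^ 2 := by positivity
  generalize a ^ 2 + b ^ 2 = n at *
  generalize a * c + b * d = t at *
  have ht : |t| < n := abs_lt_of_sq_lt_sq (by linarith) hn
  -- The squares `|t| ^ 2` and `n ^ 2` differ by at least `n + |t|`.
  nlinarith [abs_nonneg t, sq_abs t]

/-- Strict norm decrease at a maximal vector: if `v_i` has maximal Euclidean norm in an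
admissible multi-fan and `‖v_i‖ > 1`, then `‖v_{i-1}‖ < ‖v_i‖` and `‖v_{i+1}‖ < ‖v_i‖`. -/
theorem stmt_14 (l : List (ℤ × ℤ)) (h : AdmissibleMultiFan l) (i : ℤ)
    (hmax : ∀ j : ℤ, znorm (cyc l j) ≤ znorm (cyc l i))
    (hbig : 1 < znorm (cyc l i)) :
    znorm (cyc l (i - 1)) < znorm (cyc l i) ∧ znorm (cyc l (i + 1)) < znorm (cyc l i) := by
  have hprev := (h (i - 1)).1
  rw [sub_add_cancel] at hprev
  refine ⟨lt_of_le_of_ne (hmax _) fun he => ?_, lt_of_le_of_ne (hmax _) fun he => ?_⟩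
  · exact absurd (he ▸ znorm_le_one_of_isBasisZ2 hprev he) hbig.not_ge
  · exact absurd (znorm_le_one_of_isBasisZ2 (h i).1 he.symm) hbig.not_ge
end
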